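/- arXiv:1501.06711 — 2 statements merged into one kernel-verified Lean document; each statement's English description precedes it below -/
import Mathlib

section
/- Let ‖·‖ be a decomposable norm on ℝ^n and define K(x) = ‖e_x‖_u². Then for every x ∈ ℝ^n, ‖x‖² ≤ K(x) · ‖x‖_u². -/
/-!
Since `‖0‖* ≤ 1`, the vector `e x` is itself a subgradient of the norm at `x`. The subgradient
inequality tested at `0` gives `‖x‖ ≤ ⟪e x, x⟫`, and Cauchy–Schwarz for `⟪·,·⟫` then bounds
`‖x‖²` by `‖e x‖ᵤ² ‖x‖ᵤ²`.
-/

open Matrix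

namespace PGH

variable {n m : ℕ}

/-- The inner product `⟪x, y⟫ = xᵀ B y` on `ℝⁿ` induced by a matrix `B`. -/
def ip (B : Matrix (Fin n) (Fin n) ℝ) (x y : Fin n → ℝ) : ℝ :=
  dotProduct x (B.mulVec y)

/-- The norm `‖x‖ᵤ = √(xᵀ B x)` induced by the inner product. -/
noncomputable def normu (B : Matrix (Fin n) (Fin n) ℝ) (x : Fin n → ℝ) : ℝ :=
  Real.sqrt (ip B x x)

/-- `N` is a norm on `ℝⁿ`. -/
structure IsNorm (N : (Fin n → ℝ) → ℝ) : Prop where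
  nonneg : ∀ x, 0 ≤ N x
  eq_zero_iff : ∀ x, N x = 0 ↔ x = 0
  triangle : ∀ x y, N (x + y) ≤ N x + N y
  smul_eq : ∀ (c : ℝ) (x), N (c • x) = |c| * N x

/-- The dual norm `‖y‖* = sup {⟪y, x⟫ : N x ≤ 1}`. -/
noncomputable def dualNorm (B : Matrix (Fin n) (Fin n) ℝ) (N : (Fin n → ℝ) → ℝ)
    (y : Fin n → ℝ) : ℝ :=
  sSup ((fun x => ip B y x) '' {x | N x ≤ 1})

/-- The subdifferential of `N` at `x` with respect to `⟪·,·⟫`. -/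
def subdiff (B : Matrix (Fin n) (Fin n) ℝ) (N : (Fin n → ℝ) → ℝ) (x : Fin n → ℝ) :
    Set (Fin n → ℝ) :=
  {z | ∀ y, N x + ip B z (y - x) ≤ N y}

/-- The set `G` of extreme points of the unit ball of `N`. -/
def extPts (N : (Fin n → ℝ) → ℝ) : Set (Fin n → ℝ) :=
  Set.extremePoints ℝ {x | N x ≤ 1}

/-- The orthogonal complement (w.r.t. `⟪·,·⟫`) of a subspace `T`, as a set. -/
def perp (B : Matrix (Fin n) (Fin n) ℝ) (T : Submodule ℝ (Fin n → ℝ)) :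
    Set (Fin n → ℝ) :=
  {v | ∀ u ∈ T, ip B u v = 0}

/-- A decomposability structure for the norm `N`: for every `x` there are a subspace `T x`
and a vector `e x ∈ T x` with `∂N(x) = {e x + v : v ∈ (T x)ᗮ, ‖v‖* ≤ 1}`. -/
structure DecompStruct (B : Matrix (Fin n) (Fin n) ℝ) (N : (Fin n → ℝ) → ℝ) where
  T : (Fin n → ℝ) → Submodule ℝ (Fin n → ℝ)
  e : (Fin n → ℝ) → (Fin n → ℝ)
  e_mem : ∀ x, e x ∈ T x
  subdiff_eq : ∀ x, subdiff B N x =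
    {ξ | ∃ v ∈ perp B (T x), dualNorm B N v ≤ 1 ∧ ξ = e x + v}

/-- `K x = ‖e x‖ᵤ²`. -/
noncomputable def Kfun (B : Matrix (Fin n) (Fin n) ℝ) (N : (Fin n → ℝ) → ℝ)
    (D : DecompStruct B N) (x : Fin n → ℝ) : ℝ :=
  (normu B (D.e x)) ^ 2

/-- Squared Euclidean norm `‖v‖₂²` on `ℝᵐ`. -/
def sq2 (v : Fin m → ℝ) : ℝ := dotProduct v v

/-- The least-squares loss `f(x) = ½ ‖A x - b‖₂²`. -/
noncomputable def fls (A : Matrix (Fin m) (Fin n) ℝ) (b : Fin m → ℝ) (x : Fin n → ℝ) : ℝ :=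
  (1 / 2) * sq2 (A.mulVec x - b)

/-- The adjoint `A* = B⁻¹ Aᵀ` of `A` w.r.t. `⟪·,·⟫`. -/
noncomputable def Astar (B : Matrix (Fin n) (Fin n) ℝ) (A : Matrix (Fin m) (Fin n) ℝ) :
    Matrix (Fin n) (Fin m) ℝ := B⁻¹ * Aᵀ

/-- The gradient `∇f(x) = A*(A x - b)` of the least-squares loss w.r.t. `⟪·,·⟫`. -/
noncomputable def gradf (B : Matrix (Fin n) (Fin n) ℝ) (A : Matrix (Fin m) (Fin n) ℝ)
    (b : Fin m → ℝ) (x : Fin n → ℝ) : Fin n → ℝ :=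
  (Astar B A).mulVec (A.mulVec x - b)

/-- `ρ` is a valid lower restricted isometry constant of `A` at level `k`. -/
def IsLowerRIP (B : Matrix (Fin n) (Fin n) ℝ) (N : (Fin n → ℝ) → ℝ)
    (A : Matrix (Fin m) (Fin n) ℝ) (k ρ : ℝ) : Prop :=
  0 < ρ ∧ ∀ x : Fin n → ℝ, (N x) ^ 2 ≤ k * (normu B x) ^ 2 →
    ρ * (normu B x) ^ 2 ≤ sq2 (A.mulVec x)

/-- `ρ` is a valid upper restricted isometry constant of `A` at level `k`. -/
def IsUpperRIP (B : Matrix (Fin n) (Fin n) ℝ) (N : (Fin n → ℝ) → ℝ)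
    (A : Matrix (Fin m) (Fin n) ℝ) (k ρ : ℝ) : Prop :=
  0 < ρ ∧ ∀ x : Fin n → ℝ, (N x) ^ 2 ≤ k * (normu B x) ^ 2 →
    sq2 (A.mulVec x) ≤ ρ * (normu B x) ^ 2

/-- The regularized objective `φ_λ(x) = f(x) + λ N(x)`. -/
noncomputable def phi (A : Matrix (Fin m) (Fin n) ℝ) (b : Fin m → ℝ)
    (N : (Fin n → ℝ) → ℝ) (lam : ℝ) (x : Fin n → ℝ) : ℝ :=
  fls A b x + lam * N x

/-- The proximal model `m_{λ,L}(y, x)`. -/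
noncomputable def mdl (B : Matrix (Fin n) (Fin n) ℝ) (A : Matrix (Fin m) (Fin n) ℝ)
    (b : Fin m → ℝ) (N : (Fin n → ℝ) → ℝ) (lam L : ℝ) (y x : Fin n → ℝ) : ℝ :=
  fls A b y + ip B (gradf B A b y) (x - y) + (L / 2) * (normu B (x - y)) ^ 2 + lam * N x

/-- `xp = Prox_{λ,L}(y)`, i.e. `xp` minimizes `m_{λ,L}(y, ·)`. -/
def IsProx (B : Matrix (Fin n) (Fin n) ℝ) (A : Matrix (Fin m) (Fin n) ℝ)
    (b : Fin m → ℝ) (N : (Fin n → ℝ) → ℝ) (lam L : ℝ) (y xp : Fin n → ℝ) : Prop :=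
  ∀ u, mdl B A b N lam L y xp ≤ mdl B A b N lam L y u

/-- `ω_λ(x) = min_{ξ ∈ ∂N(x)} ‖λ ξ + ∇f(x)‖*`. -/
noncomputable def omega (B : Matrix (Fin n) (Fin n) ℝ) (A : Matrix (Fin m) (Fin n) ℝ)
    (b : Fin m → ℝ) (N : (Fin n → ℝ) → ℝ) (lam : ℝ) (x : Fin n → ℝ) : ℝ :=
  sInf ((fun ξ => dualNorm B N (lam • ξ + gradf B A b x)) '' subdiff B N x)

/-- Assumption 1 of the paper, phrased for given valid restricted isometry constants
`ρlow = ρ₋(A, c k₀ (1+γ)²)`, `ρlow2 = ρ₋(A, 72 r c k₀ (1+γ) γinc)` and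
`ρup2 = ρ₊(A, 72 r c k₀ (1+γ) γinc)`. -/
def Assumption1 (B : Matrix (Fin n) (Fin n) ℝ) (N : (Fin n → ℝ) → ℝ)
    (A : Matrix (Fin m) (Fin n) ℝ) (z : Fin m → ℝ)
    (c k₀ γinc lamtgt r δ γ ρlow ρlow2 ρup2 : ℝ) : Prop :=
  dualNorm B N ((Astar B A).mulVec z) ≤ lamtgt / 4 ∧
  1 < r ∧ 0 < δ ∧ δ ≤ 1 / 4 ∧
  γ = (lamtgt * (1 + δ) + dualNorm B N ((Astar B A).mulVec z)) /
      (lamtgt * (1 - δ) - dualNorm B N ((Astar B A).mulVec z)) ∧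
  IsLowerRIP B N A (c * k₀ * (1 + γ) ^ 2) ρlow ∧
  IsLowerRIP B N A (72 * r * c * k₀ * (1 + γ) * γinc) ρlow2 ∧
  IsUpperRIP B N A (72 * r * c * k₀ * (1 + γ) * γinc) ρup2 ∧
  ρlow / ρup2 > c / r

/-- One backtracking step: `M` is the smallest element of `{Lt γinc^j : j ≥ 0}`
for which the proximal point is accepted, and `xt1` is that proximal point. -/
def BacktrackMin (B : Matrix (Fin n) (Fin n) ℝ) (A : Matrix (Fin m) (Fin n) ℝ)
    (b : Fin m → ℝ) (N : (Fin n → ℝ) → ℝ) (lam γinc Lt : ℝ)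
    (xt : Fin n → ℝ) (M : ℝ) (xt1 : Fin n → ℝ) : Prop :=
  (∃ j : ℕ, M = Lt * γinc ^ j) ∧
  IsProx B A b N lam M xt xt1 ∧
  phi A b N lam xt1 ≤ mdl B A b N lam M xt xt1 ∧
  ∀ j : ℕ, Lt * γinc ^ j < M →
    ∀ u, IsProx B A b N lam (Lt * γinc ^ j) xt u →
      ¬ phi A b N lam u ≤ mdl B A b N lam (Lt * γinc ^ j) xt u

/-- The iterates of the proximal-gradient subroutine with backtracking. -/
structure ProxGradSeq (B : Matrix (Fin n) (Fin n) ℝ) (A : Matrix (Fin m) (Fin n) ℝ)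
    (b : Fin m → ℝ) (N : (Fin n → ℝ) → ℝ) (lam γinc γdec Lmin : ℝ)
    (x : ℕ → Fin n → ℝ) (L M : ℕ → ℝ) : Prop where
  step : ∀ t, BacktrackMin B A b N lam γinc (L t) (x t) (M (t + 1)) (x (t + 1))
  Lupdate : ∀ t, L (t + 1) = max Lmin (M (t + 1) / γdec)

/-- The quantity `‖M (x⁻ - x) + ∇f(x) - ∇f(x⁻)‖*` used in the stopping criterion. -/
noncomputable def stopQ (B : Matrix (Fin n) (Fin n) ℝ) (A : Matrix (Fin m) (Fin n) ℝ)
    (b : Fin m → ℝ) (N : (Fin n → ℝ) → ℝ) (Mt : ℝ) (xprev xcur : Fin n → ℝ) : ℝ :=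
  dualNorm B N (Mt • (xprev - xcur) + (gradf B A b xcur - gradf B A b xprev))


lemma ip_self_nonneg (B : Matrix (Fin n) (Fin n) ℝ) (hB : B.PosDef) (x : Fin n → ℝ) :
    0 ≤ ip B x x := by
  simpa [ip] using hB.posSemidef.dotProduct_mulVec_nonneg x

lemma normu_sq (B : Matrix (Fin n) (Fin n) ℝ) (hB : B.PosDef) (x : Fin n → ℝ) :
    normu B x ^ 2 = ip B x x :=
  Real.sq_sqrt (ip_self_nonneg B hB x)

lemma ip_comm (B : Matrix (Fin n) (Fin n) ℝ) (hB : B.PosDef) (x y : Fin n → ℝ) :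
    ip B x y = ip B y x := by
  have hT : Bᵀ = B := by simpa using hB.isHermitian.eq
  rw [ip, ip, dotProduct_mulVec, ← mulVec_transpose, hT, dotProduct_comm]

/-- Cauchy–Schwarz for `⟪·,·⟫`. -/
lemma ip_sq_le (B : Matrix (Fin n) (Fin n) ℝ) (hB : B.PosDef) (x y : Fin n → ℝ) :
    ip B x y ^ 2 ≤ ip B x x * ip B y y := by
  have h := LinearMap.BilinForm.apply_mul_apply_le_of_forall_zero_le
    (Matrix.toLinearMap₂' ℝ B)
    (fun z => by simpa [Matrix.toLinearMap₂'_apply', ip] using ip_self_nonneg B hB z) x y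
  simp only [Matrix.toLinearMap₂'_apply'] at h
  calc ip B x y ^ 2 = ip B x y * ip B y x := by rw [sq, ip_comm B hB y x]
    _ ≤ _ := h

/-- `e x` is the element `v = 0` of the parametrized subdifferential at `x`. -/
lemma DecompStruct.e_mem_subdiff {B : Matrix (Fin n) (Fin n) ℝ} {N : (Fin n → ℝ) → ℝ}
    (hN : IsNorm N) (D : DecompStruct B N) (x : Fin n → ℝ) : D.e x ∈ subdiff B N x := by
  rw [D.subdiff_eq]
  refine ⟨0, fun u _ => by simp [ip], ?_, by simp⟩
  -- The supremum is over `{0}`, the unit ball being nonempty.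
  have hne : {y | N y ≤ 1}.Nonempty := ⟨0, by simp [(hN.eq_zero_iff 0).2 rfl]⟩
  simp [dualNorm, ip, hne.image_const]

/-- For a decomposable norm, `‖x‖² ≤ K(x) ‖x‖ᵤ²` for every `x`. -/
theorem norm_sq_le_Kfun_mul_normu_sq {n : ℕ}
    (B : Matrix (Fin n) (Fin n) ℝ) (hB : B.PosDef)
    (N : (Fin n → ℝ) → ℝ) (hN : IsNorm N)
    (D : DecompStruct B N) :
    ∀ x : Fin n → ℝ, (N x) ^ 2 ≤ Kfun B N D x * (normu B x) ^ 2 := by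
  intro x
  have h := D.e_mem_subdiff hN x 0
  rw [(hN.eq_zero_iff 0).2 rfl, zero_sub] at h
  have hle : N x ≤ ip B (D.e x) x := by
    simp only [ip, mulVec_neg, dotProduct_neg] at h ⊢
    linarith
  rw [Kfun, normu_sq B hB, normu_sq B hB]
  exact (pow_le_pow_left₀ (hN.nonneg x) hle 2).trans (ip_sq_le B hB _ _)

end PGH
end

section
/- Let f(x) = ½‖Ax − b‖₂², φ_λ(x) = f(x) + λ‖x‖, and let x* ∈ argmin φ_λ. Let (x^(t)) be iterates of the proximal-gradient subroutine with backtracking (parameters γ_inc > 1, γ_dec ≥ 1, L_min > 0), so that x^(t+1) = Prox_{λ,M_{t+1}}(x^(t)) where M_{t+1} ≤ γ_inc L_f is accepted when φ_λ(x^(t+1)) ≤ m_{λ,M_{t+1}}(x^(t), x^(t+1)). Suppose that for every t: f(x^(t)) ≥ f(x*) + ⟨∇f(x*), x^(t) − x*⟩ + (μ_f/2)‖x^(t) − x*‖_u², f(x^(t+1)) ≥ f(x^(t)) + ⟨∇f(x^(t)), x^(t+1) − x^(t)⟩ + (μ_f/2)‖x^(t) − x^(t+1)‖_u², and f(x^(t+1))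 ≤ f(x^(t)) + ⟨∇f(x^(t)), x^(t+1) − x^(t)⟩ + (L_f/2)‖x^(t) − x^(t+1)‖_u². Then for all t: φ_λ(x^(t)) − φ_λ(x*) ≤ (1 − μ_f/(4 γ_inc L_f))^t (φ_λ(x^(0)) − φ_λ(x*)). -/
/-!
Write `K = γinc * Lf`, `x⁺` for the successor of an iterate `x`, and `gap x = φ(x) - φ(x*)`.
Acceptance, minimality of `x⁺` for the model and `M ≤ K` give, for every `u`,
`φ(x⁺) ≤ m_K(x, u) ≤ φ(u) + K/2 ‖u - x‖²`, the last step because `f` is convex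
(`phi_prox_le`). Taking `u = x + α (x* - x)` and using convexity of `φ`,
`gap x⁺ ≤ (1 - α) gap x + K α²/2 ‖x - x*‖²`. First-order optimality of `x*` (`first_order_min`)
combined with restricted strong convexity gives `μf/2 ‖x - x*‖² ≤ gap x`, and `α = μf / (2K)`
yields the factor `1 - μf / (4K)` (`gap_contract`).

The choice of `α` needs `α ≤ 1`. If some step moves, restricted strong convexity and smoothness
along that step force `μf ≤ Lf`, which is more than enough. If no step moves, the iterates are
constant and equal to a fixed point of the proximal map, hence to a global minimizer, and every
gap vanishes.
-/

open Matrix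

namespace PGH

variable {n m : ℕ}

lemma ip_smul_right (B : Matrix (Fin n) (Fin n) ℝ) (c : ℝ) (v d : Fin n → ℝ) :
    ip B v (c • d) = c * ip B v d := by
  simp [ip, mulVec_smul]

lemma normu_smul_sq (B : Matrix (Fin n) (Fin n) ℝ) (c : ℝ) (d : Fin n → ℝ) :
    (normu B (c • d)) ^ 2 = c ^ 2 * (normu B d) ^ 2 := by
  have h : ip B (c • d) (c • d) = c ^ 2 * ip B d d := by
    simp [ip, mulVec_smul]; ring
  rw [normu, normu, h, Real.sqrt_mul (sq_nonneg c), mul_pow, Real.sq_sqrt (sq_nonneg c)]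

lemma normu_sub_comm (B : Matrix (Fin n) (Fin n) ℝ) (x y : Fin n → ℝ) :
    (normu B (x - y)) ^ 2 = (normu B (y - x)) ^ 2 := by
  have h := normu_smul_sq B (-1) (y - x)
  simpa using h

lemma normu_sq_pos {B : Matrix (Fin n) (Fin n) ℝ} (hB : B.PosDef) {d : Fin n → ℝ}
    (hd : d ≠ 0) : 0 < (normu B d) ^ 2 := by
  have h : 0 < ip B d d := by
    have := hB.dotProduct_mulVec_pos hd
    simpa [ip] using this
  rw [normu, Real.sq_sqrt h.le]
  exact h

lemma ip_gradf {B : Matrix (Fin n) (Fin n) ℝ} (hB : B.PosDef) (A : Matrix (Fin m) (Fin n) ℝ)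
    (b : Fin m → ℝ) (y d : Fin n → ℝ) :
    ip B (gradf B A b y) d = dotProduct (A.mulVec y - b) (A.mulVec d) := by
  have hT : Bᵀ = B := by simpa [IsHermitian] using hB.isHermitian
  have hdet : IsUnit B.det := isUnit_iff_ne_zero.mpr hB.det_pos.ne'
  have h : B *ᵥ gradf B A b y = Aᵀ *ᵥ (A *ᵥ y - b) := by
    rw [gradf, Astar, mulVec_mulVec, ← Matrix.mul_assoc, Matrix.mul_nonsing_inv _ hdet,
      Matrix.one_mul]
  rw [ip, dotProduct_mulVec, ← mulVec_transpose, hT, h, mulVec_transpose, ← dotProduct_mulVec]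

/-- Exact second-order expansion of the quadratic loss. -/
lemma fls_add {B : Matrix (Fin n) (Fin n) ℝ} (hB : B.PosDef) (A : Matrix (Fin m) (Fin n) ℝ)
    (b : Fin m → ℝ) (y d : Fin n → ℝ) :
    fls A b (y + d) = fls A b y + ip B (gradf B A b y) d + (1 / 2) * sq2 (A.mulVec d) := by
  rw [ip_gradf hB, fls, fls, sq2, sq2, sq2, mulVec_add, add_sub_right_comm,
    add_dotProduct, dotProduct_add, dotProduct_add,
    dotProduct_comm (A *ᵥ d) (A *ᵥ y - b)]
  ring

lemma sq2_nonneg (v : Fin m → ℝ) : 0 ≤ sq2 v := by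
  unfold sq2 dotProduct
  exact Finset.sum_nonneg fun i _ => mul_self_nonneg (v i)

lemma sq2_smul (A : Matrix (Fin m) (Fin n) ℝ) (c : ℝ) (d : Fin n → ℝ) :
    sq2 (A.mulVec (c • d)) = c ^ 2 * sq2 (A.mulVec d) := by
  simp [sq2, mulVec_smul]; ring

lemma norm_segment_le {N : (Fin n → ℝ) → ℝ} (hN : IsNorm N) (x u : Fin n → ℝ) {a : ℝ}
    (h0 : 0 ≤ a) (h1 : a ≤ 1) : N (x + a • (u - x)) ≤ (1 - a) * N x + a * N u := by
  have h := hN.triangle ((1 - a) • x) (a • u)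
  rw [hN.smul_eq, hN.smul_eq, abs_of_nonneg h0, abs_of_nonneg (sub_nonneg.mpr h1)] at h
  have e : x + a • (u - x) = (1 - a) • x + a • u := by module
  rwa [e]

lemma nonneg_of_quad {p q : ℝ} (h : ∀ a : ℝ, 0 < a → a ≤ 1 → 0 ≤ a * p + a ^ 2 * q) :
    0 ≤ p := by
  by_contra! hp
  -- at this `a` the quadratic term is at most `-a * p / 2`, so the linear term wins
  set a := min 1 (-p / (2 * (|q| + 1))) with ha
  have hq : 0 < 2 * (|q| + 1) := by positivity
  have ha0 : 0 < a := lt_min one_pos (div_pos (by linarith) hq)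
  have h2 : a * (2 * (|q| + 1)) ≤ -p := (le_div_iff₀ hq).mp (min_le_right _ _)
  have h1 := h a ha0 (min_le_left _ _)
  have h3 : 0 ≤ a * (p + a * q) := by linarith
  have h4 : 0 ≤ p + a * q := nonneg_of_mul_nonneg_right h3 ha0
  have h5 : a * q ≤ a * |q| := mul_le_mul_of_nonneg_left (le_abs_self q) ha0.le
  linarith

/-- First-order optimality at `x` in the direction of `u`: if `x` minimizes the linearized
objective on the line through `x` and `u` up to an error quadratic in the step, then letting
the step tend to zero removes the error. -/
lemma first_order {B : Matrix (Fin n) (Fin n) ℝ} {N : (Fin n → ℝ) → ℝ} (hN : IsNorm N)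
    {lam : ℝ} (hlam : 0 < lam) (g x u : Fin n → ℝ) (q : ℝ)
    (h : ∀ a : ℝ, 0 ≤ ip B g (a • (u - x)) + a ^ 2 * q
      + lam * (N (x + a • (u - x)) - N x)) :
    0 ≤ ip B g (u - x) + lam * (N u - N x) := by
  refine nonneg_of_quad (q := q) fun a h0 h1 => ?_
  have h2 := h a
  rw [ip_smul_right] at h2
  have h3 := mul_le_mul_of_nonneg_left (norm_segment_le hN x u h0.le h1) hlam.le
  linarith

lemma first_order_min {B : Matrix (Fin n) (Fin n) ℝ} (hB : B.PosDef)
    {N : (Fin n → ℝ) → ℝ} (hN : IsNorm N) (A : Matrix (Fin m) (Fin n) ℝ) (b : Fin m → ℝ)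
    {lam : ℝ} (hlam : 0 < lam) {x : Fin n → ℝ}
    (hx : ∀ u, phi A b N lam x ≤ phi A b N lam u) (u : Fin n → ℝ) :
    0 ≤ ip B (gradf B A b x) (u - x) + lam * (N u - N x) := by
  refine first_order hN hlam _ x u ((1 / 2) * sq2 (A.mulVec (u - x))) fun a => ?_
  have h := hx (x + a • (u - x))
  rw [phi, phi, fls_add hB, sq2_smul] at h
  linarith

/-- A fixed point of the proximal map is a global minimizer. No sign condition on the
proximal parameter is required. -/
lemma min_of_prox_fixed {B : Matrix (Fin n) (Fin n) ℝ} (hB : B.PosDef)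
    {N : (Fin n → ℝ) → ℝ} (hN : IsNorm N) (A : Matrix (Fin m) (Fin n) ℝ) (b : Fin m → ℝ)
    {lam L : ℝ} (hlam : 0 < lam) {x : Fin n → ℝ} (hx : IsProx B A b N lam L x x)
    (u : Fin n → ℝ) : phi A b N lam x ≤ phi A b N lam u := by
  have h : 0 ≤ ip B (gradf B A b x) (u - x) + lam * (N u - N x) := by
    refine first_order hN hlam _ x u ((L / 2) * (normu B (u - x)) ^ 2) fun a => ?_
    have h := hx (x + a • (u - x))
    have h0 : ip B (gradf B A b x) 0 = 0 := by simp [ip]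
    have h0' : normu B 0 = 0 := by simp [normu, ip]
    rw [mdl, mdl, sub_self, h0, h0', add_sub_cancel_left, normu_smul_sq] at h
    linarith
  have e := fls_add hB A b x (u - x)
  rw [add_sub_cancel] at e
  rw [phi, phi, e]
  linarith [sq2_nonneg (A.mulVec (u - x))]

lemma phi_prox_le {B : Matrix (Fin n) (Fin n) ℝ} (hB : B.PosDef)
    (N : (Fin n → ℝ) → ℝ) (A : Matrix (Fin m) (Fin n) ℝ) (b : Fin m → ℝ)
    {lam L K : ℝ} {y xp : Fin n → ℝ} (hp : IsProx B A b N lam L y xp)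
    (hacc : phi A b N lam xp ≤ mdl B A b N lam L y xp) (hLK : L ≤ K) (d : Fin n → ℝ) :
    phi A b N lam xp ≤ phi A b N lam (y + d) + (K / 2) * (normu B d) ^ 2 := by
  have h := hacc.trans (hp (y + d))
  rw [mdl, add_sub_cancel_left] at h
  have h2 : L / 2 * (normu B d) ^ 2 ≤ K / 2 * (normu B d) ^ 2 := by gcongr
  rw [phi, phi] at *
  rw [fls_add hB]
  linarith [sq2_nonneg (A.mulVec d)]

/-- Convexity of the objective along a segment. -/
lemma phi_segment_le {B : Matrix (Fin n) (Fin n) ℝ} (hB : B.PosDef)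
    {N : (Fin n → ℝ) → ℝ} (hN : IsNorm N) (A : Matrix (Fin m) (Fin n) ℝ) (b : Fin m → ℝ)
    {lam : ℝ} (hlam : 0 < lam) (x u : Fin n → ℝ) {a : ℝ} (h0 : 0 ≤ a) (h1 : a ≤ 1) :
    phi A b N lam (x + a • (u - x)) ≤ (1 - a) * phi A b N lam x + a * phi A b N lam u := by
  have h := mul_le_mul_of_nonneg_left (norm_segment_le hN x u h0 h1) hlam.le
  have e := fls_add hB A b x (u - x)
  rw [add_sub_cancel] at e
  rw [phi, phi, phi, fls_add hB, e, ip_smul_right, sq2_smul]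
  have h2 : a ^ 2 * sq2 (A.mulVec (u - x)) ≤ a * sq2 (A.mulVec (u - x)) :=
    mul_le_mul_of_nonneg_right (by nlinarith) (sq2_nonneg _)
  linarith

/-- One-step contraction of the gap, under the step-size condition `μ ≤ 2K`. -/
lemma gap_contract {B : Matrix (Fin n) (Fin n) ℝ} (hB : B.PosDef)
    {N : (Fin n → ℝ) → ℝ} (hN : IsNorm N) (A : Matrix (Fin m) (Fin n) ℝ) (b : Fin m → ℝ)
    {lam L K μ : ℝ} (hlam : 0 < lam) (hK : 0 < K) (hμ : 0 < μ) (hμK : μ ≤ 2 * K)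
    {xs y xp : Fin n → ℝ} (hs : ∀ u, phi A b N lam xs ≤ phi A b N lam u)
    (hp : IsProx B A b N lam L y xp)
    (hacc : phi A b N lam xp ≤ mdl B A b N lam L y xp) (hLK : L ≤ K)
    (hsc : fls A b xs + ip B (gradf B A b xs) (y - xs)
        + (μ / 2) * (normu B (y - xs)) ^ 2 ≤ fls A b y) :
    phi A b N lam xp - phi A b N lam xs ≤
      (1 - μ / (4 * K)) * (phi A b N lam y - phi A b N lam xs) := by
  have hg : (μ / 2) * (normu B (y - xs)) ^ 2 ≤ phi A b N lam y - phi A b N lam xs := by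
    have := first_order_min hB hN A b hlam hs y
    rw [phi, phi]
    linarith
  -- `a = μ / (2K)` minimizes the factor `1 - a + K a² / μ`
  set a := μ / (2 * K) with ha
  have ha0 : 0 ≤ a := by positivity
  have ha1 : a ≤ 1 := (div_le_one (by positivity)).mpr hμK
  have h1 := phi_prox_le hB N A b hp hacc hLK (a • (xs - y))
  have h2 := phi_segment_le hB hN A b hlam y xs ha0 ha1
  rw [normu_smul_sq, normu_sub_comm] at h1
  have h3 : K / 2 * (a ^ 2 * (normu B (y - xs)) ^ 2)
      = a / 2 * ((μ / 2) * (normu B (y - xs)) ^ 2) := by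
    rw [ha]; field_simp
  have h4 := mul_le_mul_of_nonneg_left hg (half_pos (by positivity : 0 < a)).le
  have h5 : μ / (4 * K) = a / 2 := by rw [ha]; field_simp; ring
  rw [h5]
  linarith

/-- **Proposition 2, first conclusion: linear convergence.**
If the iterates of the proximal-gradient method with backtracking satisfy restricted strong
convexity (parameter `μf`) and restricted smoothness (parameter `Lf`), then the objective gap
decreases at the linear rate `(1 - μf / (4 γinc Lf))^t`. -/
theorem proxgrad_linear_convergence {n m : ℕ}
    (B : Matrix (Fin n) (Fin n) ℝ) (hB : B.PosDef)
    (N : (Fin n → ℝ) → ℝ) (hN : IsNorm N)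
    (A : Matrix (Fin m) (Fin n) ℝ) (b : Fin m → ℝ)
    (lam γinc γdec Lmin μf Lf : ℝ)
    (hlam : 0 < lam) (hγinc : 1 < γinc) (hγdec : 1 ≤ γdec) (hLmin : 0 < Lmin)
    (hμf : 0 < μf) (hLf : 0 < Lf)
    (xstar : Fin n → ℝ) (hstar : ∀ u, phi A b N lam xstar ≤ phi A b N lam u)
    (x : ℕ → Fin n → ℝ) (M : ℕ → ℝ)
    (hprox : ∀ t, IsProx B A b N lam (M (t + 1)) (x t) (x (t + 1)))
    (haccept : ∀ t, phi A b N lam (x (t + 1)) ≤ mdl B A b N lam (M (t + 1)) (x t) (x (t + 1)))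
    (hM : ∀ t, M (t + 1) ≤ γinc * Lf)
    (hsc1 : ∀ t, fls A b xstar + ip B (gradf B A b xstar) (x t - xstar)
        + (μf / 2) * (normu B (x t - xstar)) ^ 2 ≤ fls A b (x t))
    (hsc2 : ∀ t, fls A b (x t) + ip B (gradf B A b (x t)) (x (t + 1) - x t)
        + (μf / 2) * (normu B (x t - x (t + 1))) ^ 2 ≤ fls A b (x (t + 1)))
    (hsm : ∀ t, fls A b (x (t + 1)) ≤ fls A b (x t)
        + ip B (gradf B A b (x t)) (x (t + 1) - x t)
        + (Lf / 2) * (normu B (x t - x (t + 1))) ^ 2) :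
    ∀ t, phi A b N lam (x t) - phi A b N lam xstar ≤
      (1 - μf / (4 * γinc * Lf)) ^ t * (phi A b N lam (x 0) - phi A b N lam xstar) := by
  by_cases hle : μf ≤ Lf
  · have hK : 0 < γinc * Lf := by positivity
    have hLK : Lf ≤ γinc * Lf := le_mul_of_one_le_left hLf.le hγinc.le
    have hr : 0 ≤ 1 - μf / (4 * γinc * Lf) := by
      rw [sub_nonneg, div_le_one (by positivity)]
      linarith
    intro t
    induction t with
    | zero => simp
    | succ t ih =>
      have h := gap_contract hB hN A b hlam hK hμf (by linarith) hstar (hprox t) (haccept t)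
        (hM t) (hsc1 t)
      rw [← mul_assoc] at h
      calc _ ≤ _ := h
        _ ≤ _ := mul_le_mul_of_nonneg_left ih hr
        _ = _ := by ring
  · -- curvature bounds with `Lf < μf` are only compatible with a step of length zero
    have hfix : ∀ t, x (t + 1) = x t := by
      intro t
      by_contra hne
      have hpos := normu_sq_pos hB (sub_ne_zero.mpr (Ne.symm hne))
      have h := (hsc2 t).trans (hsm t)
      nlinarith
    intro t
    have hopt : ∀ s, phi A b N lam (x s) - phi A b N lam xstar = 0 := by
      intro s
      have hp := hprox s
      rw [hfix s] at hp
      exact sub_eq_zero.mpr (le_antisymm (min_of_prox_fixed hB hN A b hlam hp xstar) (hstar _))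
    rw [hopt t, hopt 0, mul_zero]
end PGH
end
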